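/- Fix an integer n ≥ 2, a prime ℓ, and a real number Δ ≥ 0. Suppose that for every ε > 0 there exists a constant C = C(nℓ, ε) such that for every integer D > 1 the number of degree-(nℓ) fields L with D_L = D is at most C·D^{Δ+ε}. Then for every ε > 0 there exists a constant C' = C'(n, ℓ, ε) such that every degree-n field K satisfies |Cl_K[ℓ]| ≤ C' · D_K^{ℓΔ + ε}. -/

import Mathlib

open NumberField Filter

-- The absolute value of the discriminant of an intermediate field `K` of `ℚ̄/ℚ`
-- (junk value `0` in the irrelevant case that `K/ℚ` is infinite-dimensional).
open scoped Classical in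
noncomputable def absDisc (K : IntermediateField ℚ (AlgebraicClosure ℚ)) : ℕ :=
  if h : FiniteDimensional ℚ K then
    letI : NumberField K := { to_charZero := inferInstance, to_finiteDimensional := h }
    (NumberField.discr K).natAbs
  else 0

/-- The cardinality `|Cl_K[m]|` of the `m`-torsion subgroup of the class group of `K`. -/
noncomputable def clTors (K : IntermediateField ℚ (AlgebraicClosure ℚ)) (m : ℕ) : ℕ :=
  Nat.card {x : ClassGroup (𝓞 K) // x ^ m = 1}

theorem aux_class {R : Type*} [CommRing R] [IsDedekindDomain R] {I J : Ideal R}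
    (hI : I ∈ nonZeroDivisors (Ideal R)) (hJ : J ∈ nonZeroDivisors (Ideal R))
    {ℓ : ℕ} (hℓ : ℓ ≠ 0) {b b' p q : R} (hIb : I ^ ℓ = Ideal.span {b})
    (hJb : J ^ ℓ = Ideal.span {b'}) (hp : p ≠ 0) (hq : q ≠ 0)
    (h : q ^ ℓ * b = p ^ ℓ * b') :
    ClassGroup.mk0 ⟨I, hI⟩ = ClassGroup.mk0 ⟨J, hJ⟩ := by
  rw [ClassGroup.mk0_eq_mk0_iff]
  refine ⟨q, p, hq, hp, ?_⟩
  have key : (Ideal.span {q} * I) ^ ℓ = (Ideal.span {p} * J) ^ ℓ := by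
    rw [mul_pow, mul_pow, hIb, hJb, Ideal.span_singleton_pow, Ideal.span_singleton_pow,
      Ideal.span_singleton_mul_span_singleton, Ideal.span_singleton_mul_span_singleton, h]
  apply dvd_antisymm
  · exact (UniqueFactorizationMonoid.pow_dvd_pow_iff_dvd hℓ).1 (dvd_of_eq key)
  · exact (UniqueFactorizationMonoid.pow_dvd_pow_iff_dvd hℓ).1 (dvd_of_eq key.symm)

theorem aux_diff {K L : Type*} [Field K] [NumberField K] [Field L] [NumberField L] [Algebra K L]
    {ℓ : ℕ} (hℓ : ℓ.Prime) {I : Ideal (𝓞 K)} {b : 𝓞 K}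
    (hIb : I ^ ℓ = Ideal.span {b}) (hb : ∀ c : K, c ^ ℓ ≠ (b : K)) {g : L}
    (hg : g ^ ℓ = algebraMap K L b) (htop : IntermediateField.adjoin K {g} = ⊤) :
    (ℓ : 𝓞 L) ∈ differentIdeal (𝓞 K) (𝓞 L) := by
  have hb0 : b ≠ 0 := by
    rintro rfl
    exact hb 0 (by simp [hℓ.ne_zero])
  have hbK : (b : K) ≠ 0 := by simpa using hb0
  have hg0 : g ≠ 0 := by
    rintro rfl
    rw [zero_pow hℓ.ne_zero] at hg
    exact hbK ((map_eq_zero _).1 hg.symm)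
  -- the elements `e / g`
  have hdelta : ∀ e ∈ I, ∃ d : 𝓞 L, (d : L) * g = algebraMap K L e ∧
      (ℓ : 𝓞 L) * d ^ (ℓ - 1) ∈ differentIdeal (𝓞 K) (𝓞 L) := by
    intro e he
    by_cases he0 : e = 0
    · exact ⟨0, by simp [he0], by simp [Nat.sub_ne_zero_of_lt hℓ.one_lt]⟩
    have hmem : e ^ ℓ ∈ Ideal.span {b} := hIb ▸ Ideal.pow_mem_pow he ℓ
    obtain ⟨t, ht⟩ := Ideal.mem_span_singleton'.1 hmem
    have heK : (e : K) ≠ 0 := by simpa using he0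
    have htK : (t : K) * b = (e : K) ^ ℓ := by
      have := congrArg (algebraMap (𝓞 K) K) ht
      simpa using this
    have hdl : (algebraMap K L e / g) ^ ℓ = algebraMap K L t := by
      have hbL : algebraMap K L b ≠ 0 := by simpa using hb0
      rw [div_pow, hg, ← map_pow, ← htK, map_mul, mul_div_cancel_right₀ _ hbL]
    have hint : IsIntegral ℤ (algebraMap K L e / g) := by
      apply IsIntegral.of_pow hℓ.pos
      rw [hdl]
      exact (RingOfIntegers.isIntegral_coe t).map (IsScalarTower.toAlgHom ℤ K L)
    let d : 𝓞 L := ⟨algebraMap K L e / g, hint⟩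
    have hdL : (d : L) = algebraMap K L e / g := rfl
    refine ⟨d, by rw [hdL]; field_simp, ?_⟩
    have hirr : Irreducible (Polynomial.X ^ ℓ - Polynomial.C (t : K)) := by
      apply X_pow_sub_C_irreducible_of_prime hℓ
      intro c hc
      have hc0 : c ≠ 0 := by
        rintro rfl
        rw [zero_pow hℓ.ne_zero] at hc
        rw [← hc, zero_mul] at htK
        exact pow_ne_zero _ heK htK.symm
      apply hb (e / c)
      rw [div_pow, hc, ← htK]
      have : (t : K) ≠ 0 := by rw [← hc]; exact pow_ne_zero _ hc0
      field_simp
    have hminK : minpoly K (d : L) = Polynomial.X ^ ℓ - Polynomial.C (t : K) := by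
      symm
      apply minpoly.eq_of_irreducible_of_monic hirr _ (Polynomial.monic_X_pow_sub_C _ hℓ.ne_zero)
      simp [hdL, hdl]
    have hmin : minpoly (𝓞 K) d = Polynomial.X ^ ℓ - Polynomial.C t := by
      apply Polynomial.map_injective (algebraMap (𝓞 K) K) RingOfIntegers.coe_injective
      rw [← minpoly.isIntegrallyClosed_eq_field_fractions K L
        (IsIntegralClosure.isIntegral (𝓞 K) L d)]
      rw [show algebraMap (𝓞 L) L d = (d : L) from rfl, hminK]
      simp
    have hadj : Algebra.adjoin K {algebraMap (𝓞 L) L d} = ⊤ := by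
      rw [show algebraMap (𝓞 L) L d = (d : L) from rfl]
      rw [← IntermediateField.adjoin_simple_toSubalgebra_of_isAlgebraic
        (Algebra.IsAlgebraic.isAlgebraic _)]
      have : IntermediateField.adjoin K {(d : L)} = ⊤ := by
        rw [← top_le_iff, ← htop, IntermediateField.adjoin_simple_le_iff]
        have h1 : g = algebraMap K L e / d := by
          have : algebraMap K L e ≠ 0 := by simpa using heK
          rw [hdL]; field_simp
        rw [h1]
        exact div_mem (IntermediateField.algebraMap_mem _ _)
          (IntermediateField.mem_adjoin_simple_self K _)
      rw [this]; rfl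
    have := aeval_derivative_mem_differentIdeal (𝓞 K) K L d hadj
    rw [hmin] at this
    simpa [Polynomial.derivative_X_pow] using this
  by_contra hnot
  let A : Ideal (𝓞 L) := Submodule.comap (LinearMap.mulLeft (𝓞 L) (ℓ : 𝓞 L))
    (differentIdeal (𝓞 K) (𝓞 L))
  have hA : A ≠ ⊤ := by
    intro h
    apply hnot
    have : (1 : 𝓞 L) ∈ A := h ▸ Submodule.mem_top
    simpa [A] using this
  obtain ⟨P, hP, hAP⟩ := Ideal.exists_le_maximal A hA
  have hgint : IsIntegral ℤ g := by
    apply IsIntegral.of_pow hℓ.pos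
    rw [hg]
    exact (RingOfIntegers.isIntegral_coe b).map (IsScalarTower.toAlgHom ℤ K L)
  let γ : 𝓞 L := ⟨g, hgint⟩
  have hγ : γ ^ ℓ = algebraMap (𝓞 K) (𝓞 L) b := by
    apply RingOfIntegers.coe_injective
    rw [map_pow]
    exact hg
  have hle : I.map (algebraMap (𝓞 K) (𝓞 L)) ≤ P * Ideal.span {γ} := by
    rw [Ideal.map_le_iff_le_comap]
    intro e he
    obtain ⟨d, hd, hd2⟩ := hdelta e he
    rw [Ideal.mem_comap, Ideal.mem_mul_span_singleton]
    refine ⟨d, hP.isPrime.mem_of_pow_mem (ℓ - 1) (hAP ?_), ?_⟩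
    · simpa [A] using hd2
    · apply RingOfIntegers.coe_injective
      rw [map_mul]
      exact hd
  have h2 := Ideal.pow_right_mono hle ℓ
  rw [← Ideal.map_pow, hIb, Ideal.map_span, Set.image_singleton, mul_pow,
    Ideal.span_singleton_pow, hγ, Ideal.span_singleton_le_iff_mem, Ideal.mem_mul_span_singleton] at h2
  obtain ⟨z, hz, hzb⟩ := h2
  have hbL : algebraMap (𝓞 K) (𝓞 L) b ≠ 0 := by
    rw [← hγ]
    apply pow_ne_zero
    intro h
    exact hg0 (congrArg (algebraMap (𝓞 L) L) h)
  have hz1 : z = 1 := mul_right_cancel₀ hbL (by rw [hzb, one_mul])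
  rw [hz1] at hz
  exact hP.ne_top ((Ideal.eq_top_iff_one _).2 (Ideal.pow_le_self hℓ.ne_zero hz))

theorem aux_disc {K L : Type*} [Field K] [NumberField K] [Field L] [NumberField L] [Algebra K L]
    {ℓ : ℕ} (hℓ : ℓ.Prime)
    (h : (ℓ : 𝓞 L) ∈ differentIdeal (𝓞 K) (𝓞 L)) :
    ∃ j ≤ Module.finrank ℚ L,
      (discr L).natAbs = ℓ ^ j * (discr K).natAbs ^ Module.finrank K L := by
  have h1 : Ideal.absNorm (differentIdeal (𝓞 K) (𝓞 L)) ∣ ℓ ^ Module.finrank ℚ L := by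
    have := Ideal.absNorm_dvd_absNorm_of_le ((Ideal.span_singleton_le_iff_mem _).2 h)
    refine this.trans (dvd_of_eq ?_)
    rw [Ideal.absNorm_span_singleton, show (ℓ : 𝓞 L) = algebraMap ℤ (𝓞 L) ℓ by simp,
      Algebra.norm_algebraMap, RingOfIntegers.rank]
    simp [Int.natAbs_pow]
  obtain ⟨j, hj, hj2⟩ := (Nat.dvd_prime_pow hℓ).1 h1
  refine ⟨j, hj, ?_⟩
  rw [← hj2]
  exact natAbs_discr_eq_absNorm_differentIdeal_mul_natAbs_discr_pow K (𝓞 K) L (𝓞 L)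

theorem aux_count {K Ω : Type*} [Field K] [CharZero K] [Field Ω] [Algebra K Ω] [IsAlgClosed Ω]
    (E : IntermediateField K Ω) [FiniteDimensional K E] {ℓ : ℕ} (hℓ : ℓ ≠ 0)
    {ι : Type*} (s : Finset ι) (g : ι → Ω) (hgE : ∀ i ∈ s, g i ∈ E) (hg0 : ∀ i ∈ s, g i ≠ 0)
    (hgp : ∀ i ∈ s, ∃ b : K, g i ^ ℓ = algebraMap K Ω b)
    (hinj : ∀ i ∈ s, ∀ j ∈ s, ∀ c : K, g i = algebraMap K Ω c * g j → i = j) :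
    s.card ≤ ℓ ^ Module.finrank K E := by
  classical
  have : NeZero ℓ := ⟨hℓ⟩
  have hcard : Nat.card ((E →ₐ[K] Ω) → rootsOfUnity ℓ Ω) ≤ ℓ ^ Module.finrank K E := by
    rw [Nat.card_fun, Nat.card_eq_fintype_card (α := E →ₐ[K] Ω), AlgHom.card]
    exact Nat.pow_le_pow_left (card_rootsOfUnity Ω ℓ) _
  have hu : ∀ i : s, ∀ σ : E →ₐ[K] Ω, (σ ⟨g i, hgE i i.2⟩ / g i) ^ ℓ = 1 := by
    intro i σ
    obtain ⟨b, hb⟩ := hgp i i.2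
    have hb' : (⟨g i, hgE i i.2⟩ : E) ^ ℓ = algebraMap K E b := by
      apply Subtype.ext
      simpa using hb
    rw [div_pow, ← map_pow, hb', AlgHom.commutes, hb, div_self]
    rw [← hb]
    exact pow_ne_zero _ (hg0 i i.2)
  let f : s → ((E →ₐ[K] Ω) → rootsOfUnity ℓ Ω) := fun i σ => rootsOfUnity.mkOfPowEq _ (hu i σ)
  have hf : Function.Injective f := by
    intro i j hij
    have h1 : ∀ σ : E →ₐ[K] Ω, σ ⟨g i, hgE i i.2⟩ / g i = σ ⟨g j, hgE j j.2⟩ / g j := by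
      intro σ
      have := congrArg (fun z : rootsOfUnity ℓ Ω => ((z : Ωˣ) : Ω)) (congrFun hij σ)
      simpa [f] using this
    have hi0 := hg0 i i.2
    have hj0 := hg0 j j.2
    let r : E := ⟨g i, hgE i i.2⟩ / ⟨g j, hgE j j.2⟩
    have h2 : ∀ σ : E →ₐ[K] Ω, σ r = E.val r := by
      intro σ
      have h3 := h1 σ
      have h4 : σ ⟨g j, hgE j j.2⟩ ≠ 0 := by
        intro h
        rw [map_eq_zero] at h
        exact hj0 (congrArg Subtype.val h)
      have h5 : E.val r = g i / g j := by simp [r]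
      rw [h5, map_div₀]
      field_simp at h3 ⊢
      linear_combination h3
    have htr := trace_eq_sum_embeddings (K := K) (L := E) Ω (x := r)
    have hn0 : (Module.finrank K E : Ω) ≠ 0 := by
      have : CharZero Ω := charZero_of_injective_algebraMap (algebraMap K Ω).injective
      exact_mod_cast (Module.finrank_pos (R := K) (M := E)).ne'
    have h5 : E.val r = g i / g j := by simp [r]
    rw [Finset.sum_congr rfl (fun σ _ => h2 σ), Finset.sum_const, Finset.card_univ,
      AlgHom.card, nsmul_eq_mul, h5] at htr
    apply Subtype.ext
    apply hinj i i.2 j j.2 (Algebra.trace K E r / Module.finrank K E)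
    rw [map_div₀, htr, map_natCast]
    field_simp
  calc s.card = Fintype.card s := (Fintype.card_coe s).symm
    _ = Nat.card s := Nat.card_eq_fintype_card.symm
    _ ≤ _ := Nat.card_le_card_of_injective f hf
    _ ≤ _ := hcard

theorem absDisc_eq (K : IntermediateField ℚ (AlgebraicClosure ℚ)) [NumberField K] :
    absDisc K = (discr K).natAbs := by
  rw [absDisc, dif_pos (inferInstance : FiniteDimensional ℚ K)]

theorem aux_pow_nonzero {R : Type*} [CommRing R] [IsDedekindDomain R] {I : Ideal R}
    (hI : I ∈ nonZeroDivisors (Ideal R)) {ℓ : ℕ} {b : R} (hIb : I ^ ℓ = Ideal.span {b}) :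
    b ≠ 0 := by
  rintro rfl
  have h := pow_ne_zero ℓ (nonZeroDivisors.ne_zero hI)
  rw [hIb] at h
  simp at h

theorem aux_class_K {K : Type*} [Field K] [NumberField K] {I J : Ideal (𝓞 K)}
    (hI : I ∈ nonZeroDivisors (Ideal (𝓞 K))) (hJ : J ∈ nonZeroDivisors (Ideal (𝓞 K)))
    {ℓ : ℕ} (hℓ : ℓ ≠ 0) {b b' : 𝓞 K} (hIb : I ^ ℓ = Ideal.span {b})
    (hJb : J ^ ℓ = Ideal.span {b'}) (c : K)
    (h : (b : K) = c ^ ℓ * b') :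
    ClassGroup.mk0 ⟨I, hI⟩ = ClassGroup.mk0 ⟨J, hJ⟩ := by
  have hb := aux_pow_nonzero hI hIb
  obtain ⟨p, q, hq, rfl⟩ := IsFractionRing.div_surjective (A := 𝓞 K) c
  have hq0 : q ≠ 0 := nonZeroDivisors.ne_zero hq
  have hqK : algebraMap (𝓞 K) K q ≠ 0 := by simpa using hq0
  have hp0 : p ≠ 0 := by
    rintro rfl
    apply hb
    apply RingOfIntegers.coe_injective
    change (b : K) = _
    rw [h]
    simp [hℓ]
  refine aux_class hI hJ hℓ hIb hJb hp0 hq0 ?_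
  apply RingOfIntegers.coe_injective
  rw [map_mul, map_mul, map_pow, map_pow]
  change _ * (b : K) = _ * (b' : K)
  rw [h, div_pow]
  field_simp

theorem aux_exists (K : IntermediateField ℚ (AlgebraicClosure ℚ)) [NumberField K]
    {ℓ : ℕ} (hℓ : ℓ.Prime) (x : ClassGroup (𝓞 K)) (hx : x ^ ℓ = 1) (hx1 : x ≠ 1) :
    ∃ (I : Ideal (𝓞 K)) (hI : I ∈ nonZeroDivisors (Ideal (𝓞 K))) (b : 𝓞 K)
      (g : AlgebraicClosure ℚ),
      ClassGroup.mk0 ⟨I, hI⟩ = x ∧ I ^ ℓ = Ideal.span {b} ∧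
      g ^ ℓ = algebraMap K (AlgebraicClosure ℚ) b ∧
      Module.finrank K (IntermediateField.adjoin K {g}) = ℓ ∧
      Module.finrank ℚ ((IntermediateField.adjoin K {g}).restrictScalars ℚ) =
        Module.finrank ℚ K * ℓ ∧
      ∃ j ≤ Module.finrank ℚ K * ℓ,
        absDisc ((IntermediateField.adjoin K {g}).restrictScalars ℚ) = ℓ ^ j * absDisc K ^ ℓ := by
  obtain ⟨⟨I, hI⟩, rfl⟩ := ClassGroup.mk0_surjective x
  have hpr : (I ^ ℓ).IsPrincipal := by
    rw [← ClassGroup.mk0_eq_one_iff (pow_mem hI ℓ), ← hx, ← map_pow]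
    rfl
  obtain ⟨b, hb⟩ := hpr
  rw [Ideal.submodule_span_eq] at hb
  have hnp : ∀ c : K, c ^ ℓ ≠ (b : K) := by
    intro c hc
    apply hx1
    rw [aux_class_K hI (one_mem _) hℓ.ne_zero hb (b' := 1) (by simp) c (by simp [hc])]
    exact map_one ClassGroup.mk0
  obtain ⟨g, hg⟩ := IsAlgClosed.exists_pow_nat_eq (algebraMap K (AlgebraicClosure ℚ) b) hℓ.pos
  have hirr := X_pow_sub_C_irreducible_of_prime hℓ hnp
  have hmin : minpoly K g = Polynomial.X ^ ℓ - Polynomial.C (b : K) := by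
    symm
    apply minpoly.eq_of_irreducible_of_monic hirr _ (Polynomial.monic_X_pow_sub_C _ hℓ.ne_zero)
    simp [hg]
  have hgint : IsIntegral K g := by
    refine ⟨minpoly K g, ?_, minpoly.aeval K g⟩
    rw [hmin]
    exact Polynomial.monic_X_pow_sub_C _ hℓ.ne_zero
  have hdeg : Module.finrank K (IntermediateField.adjoin K {g}) = ℓ := by
    rw [IntermediateField.adjoin.finrank hgint, hmin, Polynomial.natDegree_X_pow_sub_C]
  have : FiniteDimensional K (IntermediateField.adjoin K {g}) :=
    IntermediateField.adjoin.finiteDimensional hgint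
  have : FiniteDimensional ℚ (IntermediateField.adjoin K {g}) := FiniteDimensional.trans ℚ K _
  have : NumberField (IntermediateField.adjoin K {g}) := ⟨⟩
  have hdeg2 : Module.finrank ℚ (IntermediateField.adjoin K {g}) = Module.finrank ℚ K * ℓ := by
    have : Module.Free K (IntermediateField.adjoin K {g}) := Module.Free.of_divisionRing _ _
    have h := Module.finrank_mul_finrank ℚ K (IntermediateField.adjoin K {g})
    rw [hdeg] at h
    exact h.symm
  let e : (IntermediateField.adjoin K {g}) ≃ₐ[ℚ]
      ((IntermediateField.adjoin K {g}).restrictScalars ℚ) :=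
    AlgEquiv.refl
  have : NumberField ((IntermediateField.adjoin K {g}).restrictScalars ℚ) :=
    NumberField.of_ringEquiv _ _ e.toRingEquiv
  have hdiff := aux_diff (L := IntermediateField.adjoin K {g}) hℓ hb hnp
    (g := IntermediateField.AdjoinSimple.gen K g) (Subtype.ext hg)
    (by
      apply IntermediateField.lift_injective
      rw [IntermediateField.lift_top, IntermediateField.lift_adjoin, Set.image_singleton]
      simp)
  obtain ⟨j, hj, hj2⟩ := aux_disc hℓ hdiff
  refine ⟨I, hI, b, g, rfl, hb, hg, hdeg, ?_, j, ?_, ?_⟩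
  · rw [← hdeg2]; exact (e.toLinearEquiv.finrank_eq).symm
  · rwa [← hdeg2]
  · rw [absDisc_eq, absDisc_eq, ← discr_eq_discr_of_algEquiv _ e, hj2, hdeg]

theorem aux_finite (m D : ℕ) (hm : m ≠ 0) : {L : IntermediateField ℚ (AlgebraicClosure ℚ) |
    Module.finrank ℚ L = m ∧ absDisc L = D}.Finite := by
  refine ((NumberField.finite_of_discr_bdd (AlgebraicClosure ℚ) D).image Subtype.val).subset ?_
  rintro L ⟨hL, hLD⟩
  have hfd : FiniteDimensional ℚ L := FiniteDimensional.of_finrank_pos (by omega)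
  have : NumberField L := ⟨⟩
  refine ⟨⟨L, hfd⟩, ?_, rfl⟩
  rw [absDisc_eq] at hLD
  change |discr L| ≤ (D : ℤ)
  rw [← hLD, Int.natCast_natAbs]

theorem aux_bound (n : ℕ) (hn : 2 ≤ n) (ℓ : ℕ) (hℓ : ℓ.Prime)
    (K : IntermediateField ℚ (AlgebraicClosure ℚ)) (hK : Module.finrank ℚ K = n) :
    clTors K ℓ ≤ 1 + ℓ ^ ℓ * ∑ j ∈ Finset.range (n * ℓ + 1),
      {L : IntermediateField ℚ (AlgebraicClosure ℚ) |
          Module.finrank ℚ L = n * ℓ ∧ absDisc L = ℓ ^ j * absDisc K ^ ℓ}.ncard := by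
  classical
  have hfd : FiniteDimensional ℚ K := FiniteDimensional.of_finrank_pos (by omega)
  have : NumberField K := ⟨⟩
  have hnl : n * ℓ ≠ 0 := mul_ne_zero (by omega) hℓ.ne_zero
  let T : ℕ → Finset (IntermediateField ℚ (AlgebraicClosure ℚ)) := fun j =>
    (aux_finite (n * ℓ) (ℓ ^ j * absDisc K ^ ℓ) hnl).toFinset
  let s : Finset (ClassGroup (𝓞 K)) := Finset.univ.filter fun x => x ^ ℓ = 1
  have hs : clTors K ℓ = s.card := by
    rw [clTors, Nat.card_eq_fintype_card, Fintype.card_subtype]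
  let s' := s.erase 1
  have hs' : s.card ≤ 1 + s'.card := by
    have := Finset.pred_card_le_card_erase (s := s) (a := 1)
    simp only [s']; omega
  have hmem : ∀ x ∈ s', x ^ ℓ = 1 ∧ x ≠ 1 := by
    intro x hx
    simp only [s', s, Finset.mem_erase, Finset.mem_filter, Finset.mem_univ, true_and] at hx
    exact ⟨hx.2, hx.1⟩
  choose! I hI b g h1 h2 h3 h4 h5 j h6 h7 using
    fun (x : ClassGroup (𝓞 K)) (hx : x ^ ℓ = 1 ∧ x ≠ 1) => aux_exists K hℓ x hx.1 hx.2
  let f : ClassGroup (𝓞 K) → IntermediateField K (AlgebraicClosure ℚ) :=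
    fun x => IntermediateField.adjoin K {g x}
  have hfib : s'.card ≤ ℓ ^ ℓ * (s'.image f).card := by
    apply Finset.card_le_mul_card_image
    intro E hE
    obtain ⟨x0, hx0, rfl⟩ := Finset.mem_image.1 hE
    have hx0 := hmem x0 hx0
    have hfin : FiniteDimensional K (f x0) :=
      FiniteDimensional.of_finrank_pos (by rw [h4 x0 hx0]; exact hℓ.pos)
    have hmem' : ∀ x ∈ s'.filter (fun x => f x = f x0), (x ^ ℓ = 1 ∧ x ≠ 1) ∧ f x = f x0 := by
      intro x hx
      rw [Finset.mem_filter] at hx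
      exact ⟨hmem x hx.1, hx.2⟩
    have := aux_count (f x0) hℓ.ne_zero (s'.filter (fun x => f x = f x0)) g ?_ ?_ ?_ ?_
    · rwa [h4 x0 hx0] at this
    · intro x hx
      rw [← (hmem' x hx).2]
      exact IntermediateField.mem_adjoin_simple_self K _
    · intro x hx h0
      have hx := (hmem' x hx).1
      have := h3 x hx
      rw [h0, zero_pow hℓ.ne_zero] at this
      have := (map_eq_zero _).1 this.symm
      exact aux_pow_nonzero (hI x hx) (h2 x hx) (RingOfIntegers.coe_injective (by simpa using this))
    · intro x hx
      exact ⟨_, h3 x (hmem' x hx).1⟩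
    · intro x hx y hy c hc
      have hx := (hmem' x hx).1
      have hy := (hmem' y hy).1
      rw [← h1 x hx, ← h1 y hy]
      refine aux_class_K _ _ hℓ.ne_zero (h2 x hx) (h2 y hy) c ?_
      apply (algebraMap K (AlgebraicClosure ℚ)).injective
      rw [← h3 x hx, hc, map_mul, map_pow, ← h3 y hy, mul_pow]
  have himg : (s'.image f).card ≤ ((Finset.range (n * ℓ + 1)).biUnion T).card := by
    refine Finset.card_le_card_of_injOn (fun E => E.restrictScalars ℚ) ?_ ?_
    · intro E hE
      obtain ⟨x, hx, rfl⟩ := Finset.mem_image.1 hE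
      have hx := hmem x hx
      rw [Finset.mem_coe, Finset.mem_biUnion]
      refine ⟨j x, ?_, ?_⟩
      · have := h6 x hx
        rw [hK] at this
        rw [Finset.mem_range]; omega
      · rw [Set.Finite.mem_toFinset]
        refine ⟨?_, h7 x hx⟩
        rw [h5 x hx, hK]
    · intro E _ E' _ h
      exact IntermediateField.restrictScalars_injective ℚ h
  have hbi : ((Finset.range (n * ℓ + 1)).biUnion T).card ≤
      ∑ j ∈ Finset.range (n * ℓ + 1), {L : IntermediateField ℚ (AlgebraicClosure ℚ) |
          Module.finrank ℚ L = n * ℓ ∧ absDisc L = ℓ ^ j * absDisc K ^ ℓ}.ncard := by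
    refine Finset.card_biUnion_le.trans (Finset.sum_le_sum fun j _ => ?_)
    rw [Set.ncard_eq_toFinset_card _ (aux_finite (n * ℓ) (ℓ ^ j * absDisc K ^ ℓ) hnl)]
  rw [hs]
  refine hs'.trans (Nat.add_le_add_left (hfib.trans (Nat.mul_le_mul_left _ (himg.trans hbi))) 1)

/-- Theorem 1.6 / `D_{nℓ}(Δ) → C_{n,ℓ}(ℓΔ)`. If the number of degree-`nℓ`
fields of fixed discriminant `D > 1` is `≪_ε D^{Δ+ε}`, then every degree-`n` field `K`
satisfies `|Cl_K[ℓ]| ≪_ε D_K^{ℓΔ+ε}`. -/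
theorem discMultiplicity_implies_torsion_bound
    (n : ℕ) (hn : 2 ≤ n) (ℓ : ℕ) (hℓ : ℓ.Prime) (Δ : ℝ) (hΔ : 0 ≤ Δ)
    (hD : ∀ ε : ℝ, 0 < ε → ∃ C : ℝ, ∀ D : ℕ, 1 < D →
      (({L : IntermediateField ℚ (AlgebraicClosure ℚ) |
          Module.finrank ℚ L = n * ℓ ∧ absDisc L = D}).ncard : ℝ)
        ≤ C * (D : ℝ) ^ (Δ + ε)) :
    ∀ ε : ℝ, 0 < ε → ∃ C' : ℝ,
      ∀ K : IntermediateField ℚ (AlgebraicClosure ℚ), Module.finrank ℚ K = n →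
        (clTors K ℓ : ℝ) ≤ C' * (absDisc K : ℝ) ^ ((ℓ : ℝ) * Δ + ε) := by
  intro ε hε
  have hl0 : (0 : ℝ) < ℓ := by exact_mod_cast hℓ.pos
  have hl1 : (1 : ℝ) ≤ ℓ := by exact_mod_cast hℓ.one_lt.le
  obtain ⟨C, hC⟩ := hD (ε / ℓ) (by positivity)
  refine ⟨1 + ℓ ^ ℓ * ((n * ℓ + 1 : ℕ) * (|C| * ((ℓ : ℝ) ^ (n * ℓ)) ^ (Δ + ε / ℓ))), ?_⟩
  intro K hK
  have hfd : FiniteDimensional ℚ K := FiniteDimensional.of_finrank_pos (by omega)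
  have : NumberField K := ⟨⟩
  have hDK : 1 < absDisc K := by
    have := abs_discr_gt_two (K := K) (by omega)
    rw [absDisc_eq]
    rw [← Int.natCast_natAbs] at this
    omega
  have hDK1 : (1 : ℝ) ≤ absDisc K := by exact_mod_cast hDK.le
  set X : ℝ := (absDisc K : ℝ) ^ ((ℓ : ℝ) * Δ + ε) with hX
  have hX1 : 1 ≤ X := Real.one_le_rpow hDK1 (by positivity)
  have hterm : ∀ j ∈ Finset.range (n * ℓ + 1),
      ({L : IntermediateField ℚ (AlgebraicClosure ℚ) |
          Module.finrank ℚ L = n * ℓ ∧ absDisc L = ℓ ^ j * absDisc K ^ ℓ}.ncard : ℝ) ≤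
        |C| * ((ℓ : ℝ) ^ (n * ℓ)) ^ (Δ + ε / ℓ) * X := by
    intro j hj
    rw [Finset.mem_range] at hj
    have hgt : 1 < ℓ ^ j * absDisc K ^ ℓ :=
      lt_of_lt_of_le (Nat.one_lt_pow hℓ.ne_zero hDK)
        (Nat.le_mul_of_pos_left _ (pow_pos hℓ.pos j))
    refine (hC _ hgt).trans ?_
    have hXe : ((absDisc K : ℝ) ^ ℓ) ^ (Δ + ε / ℓ) = X := by
      rw [hX, ← Real.rpow_natCast, ← Real.rpow_mul (by positivity)]
      congr 1
      field_simp
    push_cast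
    rw [Real.mul_rpow (by positivity) (by positivity), hXe, ← mul_assoc]
    gcongr
    · exact le_abs_self C
    · omega
  have hb : (clTors K ℓ : ℝ) ≤ 1 + ℓ ^ ℓ * ∑ j ∈ Finset.range (n * ℓ + 1),
      ({L : IntermediateField ℚ (AlgebraicClosure ℚ) |
          Module.finrank ℚ L = n * ℓ ∧ absDisc L = ℓ ^ j * absDisc K ^ ℓ}.ncard : ℝ) := by
    exact_mod_cast aux_bound n hn ℓ hℓ K hK
  have hsum := Finset.sum_le_sum hterm
  rw [Finset.sum_const, Finset.card_range, nsmul_eq_mul] at hsum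
  calc (clTors K ℓ : ℝ) ≤ _ := hb
    _ ≤ 1 + ℓ ^ ℓ * ((n * ℓ + 1 : ℕ) * (|C| * ((ℓ : ℝ) ^ (n * ℓ)) ^ (Δ + ε / ℓ) * X)) := by
        gcongr
    _ ≤ X + ℓ ^ ℓ * ((n * ℓ + 1 : ℕ) * (|C| * ((ℓ : ℝ) ^ (n * ℓ)) ^ (Δ + ε / ℓ) * X)) := by
        gcongr
    _ = _ := by ring
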